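/- Consider a two-phase three-state quantum walk with finitely many defects and λ ∈ [0,2π) with e^{iλ} ≠ a_x^{(2,2)} and A_x(λ) ≠ 0 for all x ∈ ℤ (so in particular A_{±∞}(λ) ≠ 0). Then e^{iλ} is an eigenvalue of U if and only if: |tr T_{+∞}(λ)| > 2, |tr T_{−∞}(λ)| > 2, and T_{x₊}(λ)T_{x₊−1}(λ)⋯T_{x₋}(λ) v⁻ is parallel to v⁺, i.e. the cross product (T_{[x₋,x₊]} v⁻) × v⁺ = 0, where v⁻ is any eigenvector of T_{−∞}(λ) corresponding to its eigenvalue of modulus > 1, v⁺ is any eigenvector of T_{+∞}(λ) corresponding to its eigenvalue of modulus < 1, and (x₁, x₂) × (y₁, y₂) := x₁y₂ − x₂y₁. -/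

import Mathlib

open Complex Matrix ComplexConjugate

noncomputable section

/-- `μ` is an eigenvalue of the time-evolution operator `U = SC` of the three-state
quantum walk on `ℤ` with coin matrices `a x`. -/
def IsQWEigenvalue (a : ℤ → Matrix (Fin 3) (Fin 3) ℂ) (μ : ℂ) : Prop :=
  ∃ Ψ : ℤ → Fin 3 → ℂ, Ψ ≠ 0 ∧
    Summable (fun x : ℤ => ∑ i, ‖Ψ x i‖ ^ 2) ∧
    ∀ x : ℤ,
      μ * Ψ x 0 = ∑ j, a (x + 1) 0 j * Ψ (x + 1) j ∧
      μ * Ψ x 1 = ∑ j, a x 1 j * Ψ x j ∧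
      μ * Ψ x 2 = ∑ j, a (x - 1) 2 j * Ψ (x - 1) j

/-- `A(λ)` for a 3×3 coin matrix `M`. -/
def coefA (M : Matrix (Fin 3) (Fin 3) ℂ) (lam : ℝ) : ℂ :=
  M 0 0 + M 0 1 * M 1 0 / (Complex.exp (lam * Complex.I) - M 1 1)

/-- The transfer matrix `T(λ)` of a 3×3 coin matrix `M`. -/
def transfer (M : Matrix (Fin 3) (Fin 3) ℂ) (lam : ℝ) : Matrix (Fin 2) (Fin 2) ℂ :=
  (M 0 0 * Complex.exp (lam * Complex.I) - M.det * conj (M 2 2))⁻¹ •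
    !![Complex.exp (lam * Complex.I) * (Complex.exp (lam * Complex.I) - M 1 1),
        -(M 0 2 * Complex.exp (lam * Complex.I)) - M.det * conj (M 2 0);
        M 2 0 * Complex.exp (lam * Complex.I) + M.det * conj (M 0 2),
        -(M.det * (Complex.exp (-(lam * Complex.I)) - conj (M 1 1)))]

/-- The ordered product `T_{xm+n} ⋯ T_{xm+1} T_{xm}` of a family of
2×2 matrices. -/
def Tprod (T : ℤ → Matrix (Fin 2) (Fin 2) ℂ) (xm : ℤ) : ℕ → Matrix (Fin 2) (Fin 2) ℂ
  | 0 => T xm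
  | n + 1 => T (xm + (n + 1)) * Tprod T xm n

/-- The cross product `(x₁,x₂) × (y₁,y₂) = x₁y₂ − x₂y₁` on `ℂ²`. -/
def cross (v w : Fin 2 → ℂ) : ℂ := v 0 * w 1 - v 1 * w 0

/-!
Eliminating the middle component `Ψ₂` turns the eigenvalue equation into a first-order recursion
`Φ (x + 1) = T_x Φ x` on `ℂ²` for `Φ x = (Ψ₁ (x - 1), Ψ₃ x)`. Unitarity of the coin makes `T_x`
preserve the flux `|z₀|² - |z₁|²`. Hence `|det T_x| = 1` and the spectrum of `T_x` is invariant
under `ζ ↦ 1 / ζ̄`, so that `|tr T_x| > 2` exactly when `T_x` has an eigenvalue off the unit circle.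
On a constant tail, an orbit is square-summable only if it starts at an eigenvector that contracts
in the direction of the tail. So `e^{iλ}` is an eigenvalue iff the product of transfer matrices
across the defects maps the expanding line of `T_{-∞}` to the contracting line of `T_{+∞}`.
-/

open Filter Topology

/-! ### Contracted and expanded eigenvectors of `2 × 2` matrices -/

/-- `v` is an eigenvector of `S` whose eigenvalue has modulus less than one. -/
def IsContracted {n : Type*} [Fintype n] (S : Matrix n n ℂ) (v : n → ℂ) : Prop :=
  v ≠ 0 ∧ ∃ ζ : ℂ, S *ᵥ v = ζ • v ∧ ‖ζ‖ < 1

/-- `v` is an eigenvector of `S` whose eigenvalue has modulus greater than one. -/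
def IsExpanded {n : Type*} [Fintype n] (S : Matrix n n ℂ) (v : n → ℂ) : Prop :=
  v ≠ 0 ∧ ∃ ζ : ℂ, S *ᵥ v = ζ • v ∧ 1 < ‖ζ‖

section GeneralDimension

variable {n : Type*} [Fintype n] {S : Matrix n n ℂ}

lemma IsContracted.smul {v : n → ℂ} (hv : IsContracted S v) {c : ℂ} (hc : c ≠ 0) :
    IsContracted S (c • v) := by
  obtain ⟨hv0, ζ, hζv, hζ⟩ := hv
  exact ⟨smul_ne_zero hc hv0, ζ, by rw [mulVec_smul, hζv, smul_comm], hζ⟩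

variable [DecidableEq n]

lemma mulVec_ne_zero {R : Type*} [CommRing R] {S : Matrix n n R} {v : n → R}
    (hS : IsUnit S.det) (hv : v ≠ 0) : S *ᵥ v ≠ 0 := fun h =>
  hv (mulVec_injective_of_isUnit ((isUnit_iff_isUnit_det S).2 hS) (h.trans (mulVec_zero S).symm))

lemma isUnit_det_of_norm_eq_one {K : Type*} [NormedField K] {S : Matrix n n K}
    (hS : ‖S.det‖ = 1) : IsUnit S.det :=
  isUnit_iff_ne_zero.2 (norm_ne_zero_iff.1 (hS.trans_ne one_ne_zero))

lemma norm_det_inv {K : Type*} [NormedField K] {S : Matrix n n K} (hS : ‖S.det‖ = 1) :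
    ‖S⁻¹.det‖ = 1 := by
  rw [det_nonsing_inv, Ring.inverse_eq_inv', norm_inv, hS, inv_one]

lemma exists_mulVec_eq_smul_iff_mem_spectrum {K : Type*} [Field K] {S : Matrix n n K} {ζ : K} :
    (∃ v, v ≠ 0 ∧ S *ᵥ v = ζ • v) ↔ ζ ∈ spectrum K S := by
  rw [← spectrum_toLin', ← Module.End.hasEigenvalue_iff_mem_spectrum]
  constructor
  · rintro ⟨v, hv, hSv⟩
    exact Module.End.hasEigenvalue_of_hasEigenvector
      ⟨Module.End.mem_eigenspace_iff.2 (by rwa [toLin'_apply]), hv⟩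
  · intro h
    obtain ⟨v, hv⟩ := h.exists_hasEigenvector
    exact ⟨v, hv.2, by simpa only [toLin'_apply] using hv.apply_eq_smul⟩

lemma exists_isContracted_iff : (∃ v, IsContracted S v) ↔ ∃ ζ ∈ spectrum ℂ S, ‖ζ‖ < 1 := by
  simp only [IsContracted, ← exists_mulVec_eq_smul_iff_mem_spectrum]
  grind

lemma isContracted_inv_iff (hS : IsUnit S.det) {v : n → ℂ} :
    IsContracted S⁻¹ v ↔ IsExpanded S v := by
  have hinv : ∀ w : n → ℂ, S *ᵥ (S⁻¹ *ᵥ w) = w := fun w => by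
    rw [mulVec_mulVec, mul_nonsing_inv _ hS, one_mulVec]
  have hinv' : ∀ w : n → ℂ, S⁻¹ *ᵥ (S *ᵥ w) = w := fun w => by
    rw [mulVec_mulVec, nonsing_inv_mul _ hS, one_mulVec]
  refine and_congr_right fun hv => ⟨?_, ?_⟩
  · rintro ⟨ζ, hζv, hζ⟩
    have hv' : v = ζ • S *ᵥ v := by rw [← mulVec_smul, ← hζv, hinv]
    have hζ0 : ζ ≠ 0 := by rintro rfl; exact hv (by simpa using hv')
    exact ⟨ζ⁻¹, (eq_inv_smul_iff₀ hζ0).2 hv'.symm, by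
      rw [norm_inv]; exact (one_lt_inv₀ (norm_pos_iff.2 hζ0)).2 hζ⟩
  · rintro ⟨ζ, hζv, hζ⟩
    have hζ0 : ζ ≠ 0 := norm_pos_iff.1 (zero_lt_one.trans hζ)
    exact ⟨ζ⁻¹, by rw [eq_inv_smul_iff₀ hζ0, ← mulVec_smul, ← hζv, hinv'], by
      rw [norm_inv]; exact inv_lt_one_of_one_lt₀ hζ⟩

end GeneralDimension

section Cross

variable {S : Matrix (Fin 2) (Fin 2) ℂ} {v w : Fin 2 → ℂ}

lemma cross_mulVec (S : Matrix (Fin 2) (Fin 2) ℂ) (v w : Fin 2 → ℂ) :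
    cross (S *ᵥ v) (S *ᵥ w) = S.det * cross v w := by
  simp only [cross, mulVec, dotProduct, Fin.sum_univ_two, det_fin_two]
  ring

lemma cross_smul_smul (c d : ℂ) (v w : Fin 2 → ℂ) :
    cross (c • v) (d • w) = c * d * cross v w := by
  simp only [cross, Pi.smul_apply, smul_eq_mul]
  ring

lemma exists_eq_smul_of_cross_eq_zero (h : cross v w = 0) (hw : w ≠ 0) : ∃ c : ℂ, v = c • w := by
  obtain ⟨i, hi⟩ := Function.ne_iff.1 hw
  refine ⟨v i / w i, funext fun j => ?_⟩
  rw [Pi.smul_apply, smul_eq_mul, div_mul_eq_mul_div, eq_div_iff hi]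
  rw [cross, sub_eq_zero] at h
  fin_cases i <;> fin_cases j
  · rfl
  · exact h.symm
  · exact h
  · rfl

lemma IsContracted.cross_eq_zero_iff (hS : ‖S.det‖ = 1) (hv : IsContracted S v) (hw : w ≠ 0) :
    cross w v = 0 ↔ IsContracted S w := by
  constructor
  · intro h
    obtain ⟨c, rfl⟩ := exists_eq_smul_of_cross_eq_zero h hv.1
    exact hv.smul (left_ne_zero_of_smul hw)
  · rintro ⟨-, η, hηw, hη⟩
    obtain ⟨-, ζ, hζv, hζ⟩ := hv
    have hnorm : ‖η‖ * ‖ζ‖ * ‖cross w v‖ = ‖cross w v‖ := by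
      rw [← norm_mul, ← norm_mul, ← cross_smul_smul, ← hηw, ← hζv, cross_mulVec, norm_mul, hS,
        one_mul]
    have hlt : ‖η‖ * ‖ζ‖ < 1 := mul_lt_one_of_nonneg_of_lt_one_left (norm_nonneg _) hη hζ.le
    by_contra h
    exact hlt.ne ((mul_eq_right₀ (norm_ne_zero_iff.2 h)).1 hnorm)

lemma IsExpanded.exists_eq_smul (hS : ‖S.det‖ = 1) (hv : IsExpanded S v) (hw : IsExpanded S w) :
    ∃ c : ℂ, w = c • v := by
  have hunit := isUnit_det_of_norm_eq_one hS
  rw [← isContracted_inv_iff hunit] at hv hw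
  exact exists_eq_smul_of_cross_eq_zero ((hv.cross_eq_zero_iff (norm_det_inv hS) hw.1).2 hw) hv.1

end Cross

/-! ### Flux-preserving matrices -/

/-- `S` preserves the indefinite form `|z₀|² - |z₁|²` on `ℂ²`, i.e. `S ∈ U(1,1)`. For a transfer
matrix this form is the probability flux through an edge of the lattice. -/
def PreservesFlux (S : Matrix (Fin 2) (Fin 2) ℂ) : Prop :=
  Sᴴ * diagonal ![1, -1] * S = diagonal ![1, -1]

lemma conjTranspose_mul_mul_eq_of_dotProduct {n : Type*} [Fintype n] {J S : Matrix n n ℂ}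
    (h : ∀ v w, star (S *ᵥ v) ⬝ᵥ (J *ᵥ (S *ᵥ w)) = star v ⬝ᵥ (J *ᵥ w)) : Sᴴ * J * S = J := by
  classical
  ext i j
  have hij := h (Pi.single i 1) (Pi.single j 1)
  rw [star_mulVec, ← dotProduct_mulVec, mulVec_mulVec, mulVec_mulVec] at hij
  simpa [← Matrix.mul_assoc] using hij

/-- Since `S⁻¹ = J⁻¹ S* J`, the spectrum of `S` is invariant under `ζ ↦ 1 / ζ̄`. -/
lemma inv_star_mem_spectrum {𝕜 A : Type*} [Field 𝕜] [StarRing 𝕜] [Ring A] [StarRing A]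
    [Algebra 𝕜 A] [StarModule 𝕜 A] {J S : Aˣ} (h : star S * J * S = J) {ζ : 𝕜}
    (hζ : ζ ∈ spectrum 𝕜 (S : A)) : (star ζ)⁻¹ ∈ spectrum 𝕜 (S : A) := by
  have hinv : J⁻¹ * star S * J = S⁻¹ := by
    rw [eq_inv_iff_mul_eq_one, mul_assoc, mul_assoc, ← mul_assoc (star S), h, inv_mul_cancel]
  have hstar : star ζ ∈ spectrum 𝕜 ((S⁻¹ : Aˣ) : A) := by
    have hconj := spectrum.units_conjugate (R := 𝕜) (a := star (S : A)) (u := J⁻¹)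
    rw [inv_inv] at hconj
    rw [← hinv, Units.val_mul, Units.val_mul, Units.coe_star, hconj, spectrum.map_star]
    exact Set.star_mem_star.2 hζ
  rwa [← spectrum.map_inv, Set.mem_inv] at hstar

lemma exists_mem_spectrum_trace_det_eq (S : Matrix (Fin 2) (Fin 2) ℂ) :
    ∃ ζ₁ ∈ spectrum ℂ S, ∃ ζ₂ ∈ spectrum ℂ S,
      S.trace = ζ₁ + ζ₂ ∧ S.det = ζ₁ * ζ₂ ∧ ‖ζ₂‖ ≤ ‖ζ₁‖ := by
  have hcard : S.charpoly.roots.card = 2 := by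
    rw [IsAlgClosed.card_roots_eq_natDegree, charpoly_natDegree_eq_dim, Fintype.card_fin]
  obtain ⟨ζ₁, ζ₂, hroots⟩ := Multiset.card_eq_two.1 hcard
  have hmem : ∀ ζ ∈ ({ζ₁, ζ₂} : Multiset ℂ), ζ ∈ spectrum ℂ S := fun ζ hζ =>
    mem_spectrum_iff_isRoot_charpoly.2 (Polynomial.isRoot_of_mem_roots (hroots ▸ hζ))
  have htrace : S.trace = ζ₁ + ζ₂ := by
    rw [trace_eq_sum_roots_charpoly, hroots, Multiset.sum_pair]
  have hdet : S.det = ζ₁ * ζ₂ := by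
    rw [det_eq_prod_roots_charpoly, hroots, Multiset.prod_pair]
  have h₁ : ζ₁ ∈ spectrum ℂ S := hmem ζ₁ (by simp)
  have h₂ : ζ₂ ∈ spectrum ℂ S := hmem ζ₂ (by simp)
  rcases le_total ‖ζ₂‖ ‖ζ₁‖ with hle | hle
  · exact ⟨ζ₁, h₁, ζ₂, h₂, htrace, hdet, hle⟩
  · exact ⟨ζ₂, h₂, ζ₁, h₁, htrace.trans (add_comm _ _), hdet.trans (mul_comm _ _), hle⟩

lemma trace_eq_add_of_mem_spectrum {K : Type*} [Field K] {S : Matrix (Fin 2) (Fin 2) K} {ζ η : K}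
    (hζ : ζ ∈ spectrum K S) (hη : η ∈ spectrum K S) (hne : ζ ≠ η) : S.trace = ζ + η := by
  rw [mem_spectrum_iff_isRoot_charpoly, charpoly_fin_two] at hζ hη
  simp only [Polynomial.IsRoot.def, Polynomial.eval_add, Polynomial.eval_sub, Polynomial.eval_mul,
    Polynomial.eval_pow, Polynomial.eval_X, Polynomial.eval_C] at hζ hη
  apply mul_left_cancel₀ (sub_ne_zero.2 hne)
  linear_combination hη - hζ

namespace PreservesFlux

variable {S : Matrix (Fin 2) (Fin 2) ℂ}

lemma norm_det (hS : PreservesFlux S) : ‖S.det‖ = 1 := by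
  have h : star S.det * S.det = 1 := by
    simpa [det_conjTranspose] using congrArg det hS
  have hsq : ‖S.det‖ ^ 2 = 1 := by simpa [sq] using congrArg norm h
  exact (pow_eq_one_iff_of_nonneg (norm_nonneg _) two_ne_zero).1 hsq

lemma inv (hS : PreservesFlux S) : PreservesFlux S⁻¹ := by
  have hunit := isUnit_det_of_norm_eq_one hS.norm_det
  calc S⁻¹ᴴ * diagonal ![1, -1] * S⁻¹ = S⁻¹ᴴ * (Sᴴ * diagonal ![1, -1] * S) * S⁻¹ := by rw [hS]
    _ = (S * S⁻¹)ᴴ * diagonal ![1, -1] * (S * S⁻¹) := by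
      simp only [conjTranspose_mul, Matrix.mul_assoc]
    _ = diagonal ![1, -1] := by simp [mul_nonsing_inv _ hunit]

lemma inv_star_mem_spectrum (hS : PreservesFlux S) {ζ : ℂ} (hζ : ζ ∈ spectrum ℂ S) :
    (star ζ)⁻¹ ∈ spectrum ℂ S := by
  have hJ : IsUnit (diagonal ![1, -1] : Matrix (Fin 2) (Fin 2) ℂ) := by
    simp [isUnit_iff_isUnit_det]
  have hunit := (isUnit_iff_isUnit_det S).2 (isUnit_det_of_norm_eq_one hS.norm_det)
  exact _root_.inv_star_mem_spectrum (J := hJ.unit) (S := hunit.unit) (Units.ext hS) hζ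

/-- A contracted eigenvalue `ζ` is accompanied by `1 / ζ̄`, and `|ζ + 1 / ζ̄| = |ζ| + 1 / |ζ|`. -/
theorem two_lt_norm_trace_iff_exists_isContracted (hS : PreservesFlux S) :
    2 < ‖S.trace‖ ↔ ∃ v, IsContracted S v := by
  rw [exists_isContracted_iff]
  constructor
  · intro h
    obtain ⟨ζ₁, -, ζ₂, hζ₂, htrace, hdet, hle⟩ := exists_mem_spectrum_trace_det_eq S
    have hmul : ‖ζ₁‖ * ‖ζ₂‖ = 1 := by rw [← norm_mul, ← hdet, hS.norm_det]
    have hadd : 2 < ‖ζ₁‖ + ‖ζ₂‖ := h.trans_le (htrace ▸ norm_add_le _ _)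
    exact ⟨ζ₂, hζ₂, by nlinarith [norm_nonneg ζ₂]⟩
  · rintro ⟨ζ, hζ, hlt⟩
    have hζ0 : ζ ≠ 0 := by
      rintro rfl
      exact spectrum.zero_notMem ℂ
        ((isUnit_iff_isUnit_det S).2 (isUnit_det_of_norm_eq_one hS.norm_det)) hζ
    have hpos : 0 < ‖ζ‖ := norm_pos_iff.2 hζ0
    have hne : ζ ≠ (star ζ)⁻¹ := fun h => by
      have := congrArg norm h
      rw [norm_inv, norm_star] at this
      linarith [(one_lt_inv₀ hpos).2 hlt]
    have hmul : star ζ * S.trace = ((‖ζ‖ ^ 2 + 1 : ℝ) : ℂ) := by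
      have hstar : star ζ ≠ 0 := star_ne_zero.2 hζ0
      rw [trace_eq_add_of_mem_spectrum hζ (hS.inv_star_mem_spectrum hζ) hne, mul_add,
        mul_inv_cancel₀ hstar]
      push_cast
      rw [← Complex.conj_mul']
      rfl
    have hnorm : ‖ζ‖ * ‖S.trace‖ = ‖ζ‖ ^ 2 + 1 := by
      rw [← norm_star ζ, ← norm_mul, hmul, norm_star, Complex.norm_real,
        Real.norm_of_nonneg (by positivity)]
    nlinarith [sq_pos_of_pos (sub_pos.2 hlt)]

theorem two_lt_norm_trace_iff_exists_isExpanded (hS : PreservesFlux S) :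
    2 < ‖S.trace‖ ↔ ∃ v, IsExpanded S v := by
  have hunit := isUnit_det_of_norm_eq_one hS.norm_det
  have htrace : ‖S⁻¹.trace‖ = ‖S.trace‖ := by
    rw [Matrix.inv_def, trace_smul, Ring.inverse_eq_inv', norm_smul, norm_inv, hS.norm_det, inv_one,
      one_mul, adjugate_fin_two, trace_fin_two_of, trace_fin_two, add_comm]
  rw [← htrace, hS.inv.two_lt_norm_trace_iff_exists_isContracted]
  simp only [isContracted_inv_iff hunit]

end PreservesFlux

/-! ### Square-summable solutions of transfer recursions -/

lemma summable_sum_norm_sq_iff {ι κ E : Type*} [Fintype κ] [SeminormedAddCommGroup E]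
    {f : ι → κ → E} :
    (Summable fun x => ∑ i, ‖f x i‖ ^ 2) ↔ ∀ i, Summable fun x => ‖f x i‖ ^ 2 := by
  refine ⟨fun h i => h.of_nonneg_of_le (fun _ => by positivity) fun x => ?_,
    fun h => summable_sum fun i _ => h i⟩
  exact Finset.single_le_sum (f := fun i => ‖f x i‖ ^ 2) (fun _ _ => by positivity)
    (Finset.mem_univ i)

lemma tendsto_zero_of_summable_sum_norm_sq {κ E : Type*} [Fintype κ] [SeminormedAddCommGroup E]
    {u : ℕ → κ → E} (h : Summable fun n => ∑ i, ‖u n i‖ ^ 2) : Tendsto u atTop (𝓝 0) := by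
  refine tendsto_pi_nhds.2 fun i => tendsto_zero_iff_norm_tendsto_zero.2 ?_
  simpa [Real.sqrt_sq] using (summable_sum_norm_sq_iff.1 h i).tendsto_atTop_zero.sqrt

lemma summable_sum_norm_sq_pow_smul {𝕜 κ E : Type*} [NormedField 𝕜] [Fintype κ]
    [SeminormedAddCommGroup E] [NormedSpace 𝕜 E] {c : 𝕜} (hc : ‖c‖ < 1) (v : κ → E) :
    Summable fun n : ℕ => ∑ i, ‖(c ^ n • v) i‖ ^ 2 := by
  have hgeom : Summable fun n : ℕ => (‖c‖ ^ 2) ^ n :=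
    summable_geometric_of_lt_one (by positivity) (pow_lt_one₀ (norm_nonneg c) hc two_ne_zero)
  refine summable_sum_norm_sq_iff.2 fun i => (hgeom.mul_right (‖v i‖ ^ 2)).congr fun n => ?_
  rw [Pi.smul_apply, norm_smul, norm_pow]
  ring

lemma summable_int_add_nat_congr {G : Type*} [AddCommGroup G] [TopologicalSpace G]
    [IsTopologicalAddGroup G] {f : ℤ → G} (p q : ℤ) :
    (Summable fun n : ℕ => f (p + n)) ↔ Summable fun n : ℕ => f (q + n) := by
  wlog hpq : p ≤ q generalizing p q
  · exact (this q p (le_of_not_ge hpq)).symm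
  obtain ⟨k, rfl⟩ := Int.le.dest hpq
  rw [← summable_nat_add_iff k]
  simp only [Nat.cast_add, add_assoc, add_comm (k : ℤ)]

lemma summable_int_iff_summable_half_lines {G : Type*} [AddCommGroup G] [UniformSpace G]
    [IsUniformAddGroup G] [CompleteSpace G] {f : ℤ → G} (p m : ℤ) :
    Summable f ↔ (Summable fun n : ℕ => f (p + n)) ∧ Summable fun n : ℕ => f (m - n) := by
  have hneg := summable_int_add_nat_congr (f := fun x => f (-x)) (-m) 0
  simp only [neg_add, neg_neg, ← sub_eq_add_neg, zero_add] at hneg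
  rw [summable_int_iff_summable_nat_and_neg, summable_int_add_nat_congr p 0, hneg]
  simp only [zero_add]

lemma eq_pow_smul_of_succ_eq_smul {M E : Type*} [Monoid M] [MulAction M E] {u : ℕ → E} {c : M}
    (hu : ∀ n, u (n + 1) = c • u n) (n : ℕ) : u n = c ^ n • u 0 := by
  induction n with
  | zero => rw [pow_zero, one_smul]
  | succ n ih => rw [hu, ih, smul_smul, pow_succ']

lemma eq_zero_of_tendsto_zero_of_succ_eq_smul {𝕜 E : Type*} [NormedField 𝕜]
    [NormedAddCommGroup E] [NormedSpace 𝕜 E] {u : ℕ → E} {c : 𝕜}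
    (hu : ∀ n, u (n + 1) = c • u n) (hc : 1 ≤ ‖c‖) (hlim : Tendsto u atTop (𝓝 0)) : u 0 = 0 := by
  have hle : ∀ n, ‖u 0‖ ≤ ‖u n‖ := fun n => by
    rw [eq_pow_smul_of_succ_eq_smul hu n, norm_smul, norm_pow]
    exact le_mul_of_one_le_left (norm_nonneg _) (one_le_pow₀ hc)
  exact norm_le_zero_iff.1 (norm_zero (E := E) ▸ ge_of_tendsto' hlim.norm hle)

lemma orbit_succ_eq_smul {R n : Type*} [CommSemiring R] [Fintype n] {S : Matrix n n R}
    {u : ℕ → n → R} (hu : ∀ k, u (k + 1) = S *ᵥ u k) {ζ : R} (hζ : S *ᵥ u 0 = ζ • u 0) (k : ℕ) :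
    u (k + 1) = ζ • u k := by
  induction k with
  | zero => rw [hu, hζ]
  | succ k ih => rw [hu (k + 1), ih, mulVec_smul, ← hu, ih]

lemma mulVec_mulVec_fin_two {R : Type*} [CommRing R] (S : Matrix (Fin 2) (Fin 2) R)
    (v : Fin 2 → R) : S *ᵥ (S *ᵥ v) = S.trace • (S *ᵥ v) - S.det • v := by
  nontriviality R
  have hcayley := aeval_self_charpoly S
  simp only [charpoly_fin_two, map_add, map_sub, map_mul, map_pow, Polynomial.aeval_X,
    Polynomial.aeval_C, Algebra.algebraMap_eq_smul_one, smul_mul_assoc, one_mul] at hcayley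
  have hv := congrArg (· *ᵥ v) hcayley
  simp only [add_mulVec, sub_mulVec, sq, smul_mulVec, one_mulVec, zero_mulVec,
    ← mulVec_mulVec] at hv
  linear_combination hv

section Orbit

variable {S : Matrix (Fin 2) (Fin 2) ℂ} {u : ℕ → Fin 2 → ℂ}

/-- Cayley–Hamilton makes `S u - ζ₂ u` a geometric sequence of ratio `ζ₁`, which cannot decay when
`|ζ₁| ≥ 1` unless it vanishes. -/
lemma isContracted_of_tendsto_zero (hS : ‖S.det‖ = 1) (hu : ∀ n, u (n + 1) = S *ᵥ u n)
    (hu0 : u 0 ≠ 0) (hlim : Tendsto u atTop (𝓝 0)) : IsContracted S (u 0) := by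
  obtain ⟨ζ₁, -, ζ₂, -, htrace, hdet, hle⟩ := exists_mem_spectrum_trace_det_eq S
  have hmul : ‖ζ₁‖ * ‖ζ₂‖ = 1 := by rw [← norm_mul, ← hdet, hS]
  have hζ₁ : 1 ≤ ‖ζ₁‖ := by nlinarith [norm_nonneg ζ₁]
  have hzero : u 1 - ζ₂ • u 0 = 0 :=
    eq_zero_of_tendsto_zero_of_succ_eq_smul (u := fun n => u (n + 1) - ζ₂ • u n) (c := ζ₁)
      (fun n => by
        rw [hu (n + 1), hu n, mulVec_mulVec_fin_two, htrace, hdet]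
        module)
      hζ₁ (by simpa using ((tendsto_add_atTop_iff_nat 1).2 hlim).sub (hlim.const_smul ζ₂))
  have heig : S *ᵥ u 0 = ζ₂ • u 0 := by rw [← hu]; exact sub_eq_zero.1 hzero
  refine ⟨hu0, ζ₂, heig, lt_of_not_ge fun hζ₂ => hu0 ?_⟩
  exact eq_zero_of_tendsto_zero_of_succ_eq_smul (orbit_succ_eq_smul hu heig) hζ₂ hlim

lemma summable_orbit_iff (hS : ‖S.det‖ = 1) (hu : ∀ n, u (n + 1) = S *ᵥ u n) (hu0 : u 0 ≠ 0) :
    (Summable fun n => ∑ i, ‖u n i‖ ^ 2) ↔ IsContracted S (u 0) := by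
  refine ⟨fun h => isContracted_of_tendsto_zero hS hu hu0 (tendsto_zero_of_summable_sum_norm_sq h),
    ?_⟩
  rintro ⟨-, ζ, hζu, hζ⟩
  exact (summable_sum_norm_sq_pow_smul hζ (u 0)).congr fun n => by
    rw [eq_pow_smul_of_succ_eq_smul (orbit_succ_eq_smul hu hζu) n]

end Orbit

/-- `Φ` solves the first-order recursion `Φ (x + 1) = T x Φ x` on the whole of `ℤ`. -/
def IsTransferSolution {R n : Type*} [NonUnitalNonAssocSemiring R] [Fintype n]
    (T : ℤ → Matrix n n R) (Φ : ℤ → n → R) : Prop :=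
  ∀ x, Φ (x + 1) = T x *ᵥ Φ x

section Invertible

variable {R n : Type*} [CommRing R] [Fintype n] [DecidableEq n] {T : ℤ → Matrix n n R}
  {Φ : ℤ → n → R}

lemma exists_isTransferSolution (hT : ∀ x, IsUnit (T x).det) (m : ℤ) (v : n → R) :
    ∃ Φ, IsTransferSolution T Φ ∧ Φ m = v := by
  refine ⟨fun x => Int.inductionOn' (motive := fun _ => n → R) x m v
    (fun k _ φ => T k *ᵥ φ) (fun k _ φ => (T (k - 1))⁻¹ *ᵥ φ), fun x => ?_,
    Int.inductionOn'_self⟩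
  rcases le_or_gt m x with hx | hx
  · exact Int.inductionOn'_add_one hx
  · obtain ⟨y, rfl⟩ : ∃ y, x = y - 1 := ⟨x + 1, by ring⟩
    beta_reduce
    rw [sub_add_cancel, Int.inductionOn'_sub_one (by lia), mulVec_mulVec,
      mul_nonsing_inv _ (hT _), one_mulVec]

namespace IsTransferSolution

lemma inv_mulVec (hΦ : IsTransferSolution T Φ) (hT : ∀ x, IsUnit (T x).det) (x : ℤ) :
    (T x)⁻¹ *ᵥ Φ (x + 1) = Φ x := by
  rw [hΦ, mulVec_mulVec, nonsing_inv_mul _ (hT x), one_mulVec]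

lemma ne_zero (hΦ : IsTransferSolution T Φ) (hT : ∀ x, IsUnit (T x).det) (h0 : Φ ≠ 0) (x : ℤ) :
    Φ x ≠ 0 := by
  intro hx
  refine h0 (funext fun y => ?_)
  induction y using Int.inductionOn' (b := x) with
  | zero => exact hx
  | succ k _ ih => rw [hΦ, ih, Pi.zero_apply, Pi.zero_apply, mulVec_zero]
  | pred k _ ih =>
    rw [← hΦ.inv_mulVec hT, sub_add_cancel, ih, Pi.zero_apply, Pi.zero_apply, mulVec_zero]

end IsTransferSolution

end Invertible

namespace IsTransferSolution

variable {T : ℤ → Matrix (Fin 2) (Fin 2) ℂ} {Φ : ℤ → Fin 2 → ℂ} {S : Matrix (Fin 2) (Fin 2) ℂ}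

lemma eq_Tprod_mulVec (hΦ : IsTransferSolution T Φ) (m : ℤ) (k : ℕ) :
    Φ (m + k + 1) = Tprod T m k *ᵥ Φ m := by
  induction k with
  | zero => simpa only [Nat.cast_zero, add_zero, Tprod] using hΦ m
  | succ k ih => rw [Tprod, ← mulVec_mulVec, ← ih, hΦ, Nat.cast_succ, add_assoc m]

lemma summable_right_iff (hΦ : IsTransferSolution T Φ) {p : ℤ} (hS : ‖S.det‖ = 1)
    (hT : ∀ x, p ≤ x → T x = S) (h0 : Φ p ≠ 0) :
    (Summable fun n : ℕ => ∑ i, ‖Φ (p + n) i‖ ^ 2) ↔ IsContracted S (Φ p) := by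
  have horbit : ∀ n : ℕ, Φ (p + (n + 1 : ℕ)) = S *ᵥ Φ (p + n) := fun n => by
    rw [← hT (p + n) (by lia), ← hΦ, Nat.cast_succ, add_assoc]
  simpa using summable_orbit_iff (u := fun n : ℕ => Φ (p + n)) hS horbit (by simpa using h0)

lemma summable_left_iff (hΦ : IsTransferSolution T Φ) {m : ℤ} (hS : ‖S.det‖ = 1)
    (hT : ∀ x, x < m → T x = S) (h0 : Φ m ≠ 0) :
    (Summable fun n : ℕ => ∑ i, ‖Φ (m - n) i‖ ^ 2) ↔ IsExpanded S (Φ m) := by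
  have hunit := isUnit_det_of_norm_eq_one hS
  have horbit : ∀ n : ℕ, Φ (m - (n + 1 : ℕ)) = S⁻¹ *ᵥ Φ (m - n) := fun n => by
    rw [show m - (n : ℤ) = m - (n + 1 : ℕ) + 1 by lia, hΦ, hT _ (by lia), mulVec_mulVec,
      nonsing_inv_mul _ hunit, one_mulVec]
  rw [← isContracted_inv_iff hunit]
  simpa using summable_orbit_iff (u := fun n : ℕ => Φ (m - n)) (norm_det_inv hS) horbit
    (by simpa using h0)

end IsTransferSolution

section TwoPhase

variable {T : ℤ → Matrix (Fin 2) (Fin 2) ℂ} {Sp Sm : Matrix (Fin 2) (Fin 2) ℂ} {m p : ℤ}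

lemma isUnit_det_Tprod (hT : ∀ x, IsUnit (T x).det) (m : ℤ) (k : ℕ) :
    IsUnit (Tprod T m k).det := by
  induction k with
  | zero => exact hT m
  | succ k ih => rw [Tprod, det_mul]; exact (hT _).mul ih

theorem exists_summable_isTransferSolution_iff (hdet : ∀ x, ‖(T x).det‖ = 1) (hmp : m ≤ p)
    (hp : ∀ x, p ≤ x → T x = Sp) (hm : ∀ x, x < m → T x = Sm) :
    (∃ Φ, Φ ≠ 0 ∧ (Summable fun x => ∑ i, ‖Φ x i‖ ^ 2) ∧ IsTransferSolution T Φ) ↔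
      ∃ v, IsExpanded Sm v ∧ IsContracted Sp (Tprod T m (p - m).toNat *ᵥ v) := by
  have hT : ∀ x, IsUnit (T x).det := fun x => isUnit_det_of_norm_eq_one (hdet x)
  have hSp : ‖Sp.det‖ = 1 := hp p le_rfl ▸ hdet p
  have hSm : ‖Sm.det‖ = 1 := hm (m - 1) (by lia) ▸ hdet (m - 1)
  have hsummable : ∀ Φ, IsTransferSolution T Φ → Φ ≠ 0 →
      ((Summable fun x => ∑ i, ‖Φ x i‖ ^ 2) ↔
        IsExpanded Sm (Φ m) ∧ IsContracted Sp (Tprod T m (p - m).toNat *ᵥ Φ m)) := by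
    intro Φ hΦ h0
    have hne := hΦ.ne_zero hT h0
    rw [summable_int_iff_summable_half_lines (p + 1) m, and_comm,
      hΦ.summable_left_iff hSm hm (hne m),
      hΦ.summable_right_iff hSp (fun x hx => hp x (by lia)) (hne (p + 1)), ← hΦ.eq_Tprod_mulVec,
      show m + ((p - m).toNat : ℤ) = p by lia]
  constructor
  · rintro ⟨Φ, h0, hsum, hΦ⟩
    exact ⟨Φ m, (hsummable Φ hΦ h0).1 hsum⟩
  · rintro ⟨v, hv⟩
    obtain ⟨Φ, hΦ, rfl⟩ := exists_isTransferSolution hT m v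
    have h0 : Φ ≠ 0 := fun h => hv.1.1 (congrFun h m)
    exact ⟨Φ, h0, (hsummable Φ hΦ h0).2 hv, hΦ⟩

theorem exists_isExpanded_isContracted_iff {P : Matrix (Fin 2) (Fin 2) ℂ} (hP : IsUnit P.det)
    (hSp : PreservesFlux Sp) (hSm : PreservesFlux Sm) :
    (∃ v, IsExpanded Sm v ∧ IsContracted Sp (P *ᵥ v)) ↔
      2 < ‖Sp.trace‖ ∧ 2 < ‖Sm.trace‖ ∧
        ∀ v w, IsExpanded Sm v → IsContracted Sp w → cross (P *ᵥ v) w = 0 := by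
  rw [hSp.two_lt_norm_trace_iff_exists_isContracted, hSm.two_lt_norm_trace_iff_exists_isExpanded]
  constructor
  · rintro ⟨v₀, hv₀, hPv₀⟩
    refine ⟨⟨_, hPv₀⟩, ⟨v₀, hv₀⟩, fun v w hv hw => ?_⟩
    obtain ⟨c, rfl⟩ := hv₀.exists_eq_smul hSm.norm_det hv
    have hPv : IsContracted Sp (P *ᵥ (c • v₀)) := by
      rw [mulVec_smul]
      exact hPv₀.smul (left_ne_zero_of_smul hv.1)
    exact (hw.cross_eq_zero_iff hSp.norm_det hPv.1).2 hPv
  · rintro ⟨⟨w, hw⟩, ⟨v, hv⟩, hcross⟩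
    exact ⟨v, hv, (hw.cross_eq_zero_iff hSp.norm_det (mulVec_ne_zero hP hv.1)).1
      (hcross v w hv hw)⟩

end TwoPhase

/-! ### The transfer matrix of a coin -/

section Elimination

variable {K : Type*} [Field K]

/-- The middle component of the state at a site with coin `M`, as determined by its outer
components `q`, `r` through the second row of the eigenvalue equation for `μ`. -/
def middleComponent (M : Matrix (Fin 3) (Fin 3) K) (μ q r : K) : K :=
  (M 1 0 * q + M 1 2 * r) / (μ - M 1 1)

/-- The two-state coin left over when the middle component is eliminated from the eigenvalue
equation for `μ`; its upper left entry is `A(λ)`. -/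
def effectiveCoin (M : Matrix (Fin 3) (Fin 3) K) (μ : K) : Matrix (Fin 2) (Fin 2) K :=
  !![M 0 0 + M 0 1 * M 1 0 / (μ - M 1 1), M 0 2 + M 0 1 * M 1 2 / (μ - M 1 1);
    M 2 0 + M 2 1 * M 1 0 / (μ - M 1 1), M 2 2 + M 2 1 * M 1 2 / (μ - M 1 1)]

/-- Solving `N (q, r) = μ (p, s)` for `(q, s)` in terms of `(p, r)` gives this matrix. -/
def scatteringToTransfer (N : Matrix (Fin 2) (Fin 2) K) (μ : K) : Matrix (Fin 2) (Fin 2) K :=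
  (N 0 0)⁻¹ • !![μ, -N 0 1; N 1 0, μ⁻¹ * N.det]

lemma mulVec_eq_smul_iff_effectiveCoin {M : Matrix (Fin 3) (Fin 3) K} {μ : K} (hμ : μ ≠ M 1 1)
    (p s : K) (ψ : Fin 3 → K) :
    M *ᵥ ψ = μ • ![p, ψ 1, s] ↔
      ψ 1 = middleComponent M μ (ψ 0) (ψ 2) ∧ effectiveCoin M μ *ᵥ ![ψ 0, ψ 2] = μ • ![p, s] := by
  have hsub : μ - M 1 1 ≠ 0 := sub_ne_zero.2 hμ
  have hmiddle : (M *ᵥ ψ) 1 = μ * ψ 1 ↔ ψ 1 = middleComponent M μ (ψ 0) (ψ 2) := by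
    rw [middleComponent, eq_div_iff hsub]
    simp only [mulVec, dotProduct, Fin.sum_univ_three]
    constructor <;> intro h <;> linear_combination -h
  have houter : ψ 1 = middleComponent M μ (ψ 0) (ψ 2) →
      effectiveCoin M μ *ᵥ ![ψ 0, ψ 2] = ![(M *ᵥ ψ) 0, (M *ᵥ ψ) 2] := fun h => by
    ext i
    fin_cases i <;>
      simp [effectiveCoin, mulVec, dotProduct, Fin.sum_univ_two, Fin.sum_univ_three, h,
        middleComponent] <;>
      field
  have hrows : M *ᵥ ψ = μ • ![p, ψ 1, s] ↔
      (M *ᵥ ψ) 1 = μ * ψ 1 ∧ ![(M *ᵥ ψ) 0, (M *ᵥ ψ) 2] = μ • ![p, s] := by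
    simp only [funext_iff, Fin.forall_fin_succ]
    simpa [and_assoc] using and_left_comm
  rw [hrows, hmiddle]
  exact and_congr_right fun h => by rw [houter h]

lemma mulVec_eq_smul_iff_scatteringToTransfer {N : Matrix (Fin 2) (Fin 2) K} {μ : K} (hμ : μ ≠ 0)
    (hN : N 0 0 ≠ 0) (p q r s : K) :
    N *ᵥ ![q, r] = μ • ![p, s] ↔ ![q, s] = scatteringToTransfer N μ *ᵥ ![p, r] := by
  rw [scatteringToTransfer, smul_mulVec, eq_inv_smul_iff₀ hN]
  simp only [funext_iff, Fin.forall_fin_two, mulVec, dotProduct, Fin.sum_univ_two, det_fin_two,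
    Pi.smul_apply, smul_eq_mul, cons_val_zero, cons_val_one, of_apply]
  have hfirst : N 0 0 * q + N 0 1 * r = μ * p ↔ N 0 0 * q = μ * p + -N 0 1 * r := by
    constructor <;> intro h <;> linear_combination h
  rw [hfirst]
  refine and_congr_right fun h => ?_
  field_simp
  constructor
  · intro h'
    linear_combination N 1 0 * h - N 0 0 * h'
  · intro h'
    apply mul_left_cancel₀ hN
    linear_combination N 1 0 * h - h'

end Elimination

lemma adjugate_eq_det_smul_star {n : Type*} [Fintype n] [DecidableEq n] {R : Type*} [CommRing R]
    [StarRing R] {M : Matrix n n R} (hM : M ∈ unitaryGroup n R) : M.adjugate = M.det • star M := by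
  calc M.adjugate = M.adjugate * (M * star M) := by rw [mem_unitaryGroup_iff.1 hM, mul_one]
    _ = M.det • star M := by rw [← mul_assoc, adjugate_mul, smul_mul_assoc, one_mul]

lemma star_mulVec_dotProduct_mulVec {n : Type*} [Fintype n] [DecidableEq n] {R : Type*} [CommRing R]
    [StarRing R] {M : Matrix n n R} (hM : M ∈ unitaryGroup n R) (v w : n → R) :
    star (M *ᵥ v) ⬝ᵥ (M *ᵥ w) = star v ⬝ᵥ w := by
  rw [star_mulVec, ← dotProduct_mulVec, mulVec_mulVec, ← star_eq_conjTranspose,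
    mem_unitaryGroup_iff'.1 hM, one_mulVec]

lemma cons_fin_two_eta {α : Type*} (v : Fin 2 → α) : ![v 0, v 1] = v :=
  FinVec.etaExpand_eq v

section Transfer

variable {M : Matrix (Fin 3) (Fin 3) ℂ} {lam : ℝ}

/-- The formula in terms of `det M` and conjugates is the effective one rewritten with
`adj M = det M • M*`. -/
lemma transfer_eq_scatteringToTransfer (hM : M ∈ unitaryGroup (Fin 3) ℂ)
    (hne : exp (lam * I) ≠ M 1 1) :
    transfer M lam = scatteringToTransfer (effectiveCoin M (exp (lam * I))) (exp (lam * I)) := by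
  have hadjugate : ∀ i j, M.adjugate i j = M.det * conj (M j i) := fun i j =>
    congrFun₂ (adjugate_eq_det_smul_star hM) i j
  have h02 : M.det * conj (M 2 0) = M 0 1 * M 1 2 - M 0 2 * M 1 1 := by
    rw [← hadjugate, adjugate_fin_three]
    simp
  have h11 : M.det * conj (M 1 1) = M 0 0 * M 2 2 - M 0 2 * M 2 0 := by
    rw [← hadjugate, adjugate_fin_three]
    simp
  have h20 : M.det * conj (M 0 2) = M 1 0 * M 2 1 - M 1 1 * M 2 0 := by
    rw [← hadjugate, adjugate_fin_three]
    simp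
  have h22 : M.det * conj (M 2 2) = M 0 0 * M 1 1 - M 0 1 * M 1 0 := by
    rw [← hadjugate, adjugate_fin_three]
    simp
  have hμ : exp (lam * I) ≠ 0 := exp_ne_zero _
  have hsub := sub_ne_zero.2 hne
  rw [transfer, exp_neg, scatteringToTransfer]
  generalize exp (lam * I) = μ at hne hμ hsub ⊢
  have hdenom : M 0 0 * μ - M.det * conj (M 2 2) = effectiveCoin M μ 0 0 * (μ - M 1 1) := by
    rw [h22, effectiveCoin, of_apply, cons_val_zero, cons_val_zero]
    field
  rw [hdenom, mul_inv, mul_smul]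
  congr 1
  rw [inv_smul_eq_iff₀ hsub, mul_sub M.det, h02, h20, h11]
  ext i j
  fin_cases i <;> fin_cases j <;> simp [effectiveCoin, det_fin_two, det_fin_three] <;> field

lemma mulVec_eq_exp_smul_iff_transfer (hM : M ∈ unitaryGroup (Fin 3) ℂ)
    (hne : exp (lam * I) ≠ M 1 1) (hA : coefA M lam ≠ 0) (p s : ℂ) (ψ : Fin 3 → ℂ) :
    M *ᵥ ψ = exp (lam * I) • ![p, ψ 1, s] ↔
      ψ 1 = middleComponent M (exp (lam * I)) (ψ 0) (ψ 2) ∧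
        ![ψ 0, s] = transfer M lam *ᵥ ![p, ψ 2] := by
  rw [mulVec_eq_smul_iff_effectiveCoin hne,
    mulVec_eq_smul_iff_scatteringToTransfer (exp_ne_zero _) hA,
    transfer_eq_scatteringToTransfer hM hne]

/-- Unitarity of the coin balances incoming against outgoing amplitudes, and the middle component
contributes equally to both sides. -/
lemma preservesFlux_transfer (hM : M ∈ unitaryGroup (Fin 3) ℂ)
    (hne : exp (lam * I) ≠ M 1 1) (hA : coefA M lam ≠ 0) : PreservesFlux (transfer M lam) := by
  refine conjTranspose_mul_mul_eq_of_dotProduct fun v w => ?_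
  have hstate : ∀ v : Fin 2 → ℂ, ∃ b, M *ᵥ ![(transfer M lam *ᵥ v) 0, b, v 1] =
      exp (lam * I) • ![v 0, b, (transfer M lam *ᵥ v) 1] := fun v => by
    refine ⟨middleComponent M (exp (lam * I)) ((transfer M lam *ᵥ v) 0) (v 1),
      (mulVec_eq_exp_smul_iff_transfer hM hne hA _ _ ![_, _, _]).2 ⟨rfl, ?_⟩⟩
    simp only [cons_val]
    rw [cons_fin_two_eta, cons_fin_two_eta]
  obtain ⟨b, hb⟩ := hstate v
  obtain ⟨c, hc⟩ := hstate w
  have hunitary := star_mulVec_dotProduct_mulVec hM ![(transfer M lam *ᵥ v) 0, b, v 1]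
    ![(transfer M lam *ᵥ w) 0, c, w 1]
  have hphase : star (exp (lam * I)) * exp (lam * I) = 1 := by
    rw [← starRingEnd_apply, conj_mul', norm_exp_ofReal_mul_I, ofReal_one, one_pow]
  rw [hb, hc, star_smul, smul_dotProduct, dotProduct_smul, smul_smul, hphase, one_smul] at hunitary
  simp [dotProduct, Fin.sum_univ_three, Fin.sum_univ_two, mulVec_diagonal] at hunitary ⊢
  linear_combination -hunitary

end Transfer

/-! ### Eigenfunctions of the walk -/

lemma isQWEigenvalue_iff_exists_mulVec_eq {a : ℤ → Matrix (Fin 3) (Fin 3) ℂ} {μ : ℂ} :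
    IsQWEigenvalue a μ ↔ ∃ Ψ : ℤ → Fin 3 → ℂ, Ψ ≠ 0 ∧ (Summable fun x => ∑ i, ‖Ψ x i‖ ^ 2) ∧
      ∀ x, a x *ᵥ Ψ x = μ • ![Ψ (x - 1) 0, Ψ x 1, Ψ (x + 1) 2] := by
  refine exists_congr fun Ψ => and_congr_right fun _ => and_congr_right fun _ => ?_
  constructor
  · intro h x
    ext i
    fin_cases i
    · simpa [mulVec, dotProduct] using (h (x - 1)).1.symm
    · simpa [mulVec, dotProduct] using (h x).2.1.symm
    · simpa [mulVec, dotProduct] using (h (x + 1)).2.2.symm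
  · intro h x
    refine ⟨?_, ?_, ?_⟩
    · simpa [mulVec, dotProduct] using (congrFun (h (x + 1)) 0).symm
    · simpa [mulVec, dotProduct] using (congrFun (h x) 1).symm
    · simpa [mulVec, dotProduct] using (congrFun (h (x - 1)) 2).symm

/-- The state of the walk with amplitudes `Φ x` on the edge between `x - 1` and `x`: there
`Φ x 0 = Ψ₁(x - 1)` and `Φ x 1 = Ψ₃(x)`. -/
def liftedState (a : ℤ → Matrix (Fin 3) (Fin 3) ℂ) (μ : ℂ) (Φ : ℤ → Fin 2 → ℂ) (x : ℤ) :
    Fin 3 → ℂ :=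
  ![Φ (x + 1) 0, middleComponent (a x) μ (Φ (x + 1) 0) (Φ x 1), Φ x 1]

section Walk

variable {a : ℤ → Matrix (Fin 3) (Fin 3) ℂ} {μ : ℂ} {Φ : ℤ → Fin 2 → ℂ}

lemma liftedState_eq_zero_iff : liftedState a μ Φ = 0 ↔ Φ = 0 := by
  constructor
  · intro h
    ext x i
    fin_cases i
    · simpa [liftedState] using congrFun₂ h (x - 1) 0
    · simpa [liftedState] using congrFun₂ h x 2
  · rintro rfl
    ext x i
    fin_cases i <;> simp [liftedState, middleComponent]

lemma norm_middleComponent_sq_le {M : Matrix (Fin 3) (Fin 3) ℂ} (hM : M ∈ unitaryGroup (Fin 3) ℂ)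
    (μ q r : ℂ) :
    ‖middleComponent M μ q r‖ ^ 2 ≤ ‖(μ - M 1 1)⁻¹‖ ^ 2 * (2 * (‖q‖ ^ 2 + ‖r‖ ^ 2)) := by
  have hnum : ‖M 1 0 * q + M 1 2 * r‖ ≤ ‖q‖ + ‖r‖ := by
    refine (norm_add_le _ _).trans ?_
    rw [norm_mul, norm_mul]
    gcongr <;> exact mul_le_of_le_one_left (norm_nonneg _) (entry_norm_bound_of_unitary hM _ _)
  rw [middleComponent, div_eq_inv_mul, norm_mul, mul_pow]
  gcongr
  exact (pow_le_pow_left₀ (norm_nonneg _) hnum 2).trans add_sq_le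

lemma summable_liftedState_iff (hunit : ∀ x, a x ∈ unitaryGroup (Fin 3) ℂ) {K : ℝ}
    (hK : ∀ x, ‖(μ - a x 1 1)⁻¹‖ ≤ K) :
    (Summable fun x => ∑ i, ‖liftedState a μ Φ x i‖ ^ 2) ↔
      Summable fun x => ∑ i, ‖Φ x i‖ ^ 2 := by
  have hshift : (Summable fun x => ‖Φ (x + 1) 0‖ ^ 2) ↔ Summable fun x => ‖Φ x 0‖ ^ 2 :=
    (Equiv.addRight (1 : ℤ)).summable_iff (f := fun x => ‖Φ x 0‖ ^ 2)
  have hmiddle : (Summable fun x => ‖Φ (x + 1) 0‖ ^ 2) → (Summable fun x => ‖Φ x 1‖ ^ 2) →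
      Summable fun x => ‖middleComponent (a x) μ (Φ (x + 1) 0) (Φ x 1)‖ ^ 2 := fun h0 h1 => by
    refine (((h0.add h1).mul_left 2).mul_left (K ^ 2)).of_nonneg_of_le (fun _ => by positivity)
      fun x => (norm_middleComponent_sq_le (hunit x) _ _ _).trans ?_
    gcongr
    exact hK x
  simp only [summable_sum_norm_sq_iff, Fin.forall_fin_succ, liftedState, ← hshift]
  simpa using by tauto

end Walk

lemma forall_mulVec_eq_iff_exists_liftedState {a : ℤ → Matrix (Fin 3) (Fin 3) ℂ} {lam : ℝ}
    (hunit : ∀ x, a x ∈ unitaryGroup (Fin 3) ℂ) (hne : ∀ x, exp (lam * I) ≠ a x 1 1)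
    (hA : ∀ x, coefA (a x) lam ≠ 0) (Ψ : ℤ → Fin 3 → ℂ) :
    (∀ x, a x *ᵥ Ψ x = exp (lam * I) • ![Ψ (x - 1) 0, Ψ x 1, Ψ (x + 1) 2]) ↔
      ∃ Φ, IsTransferSolution (fun x => transfer (a x) lam) Φ ∧
        liftedState a (exp (lam * I)) Φ = Ψ := by
  simp only [mulVec_eq_exp_smul_iff_transfer (hunit _) (hne _) (hA _)]
  constructor
  · intro h
    refine ⟨fun x => ![Ψ (x - 1) 0, Ψ x 2], fun x => ?_, ?_⟩
    · simpa only [add_sub_cancel_right] using (h x).2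
    · ext x i
      fin_cases i <;> simp [liftedState, (h x).1]
  · rintro ⟨Φ, hΦ, rfl⟩ x
    refine ⟨rfl, ?_⟩
    simpa [liftedState, cons_fin_two_eta] using hΦ x

theorem isQWEigenvalue_iff_exists_isTransferSolution {a : ℤ → Matrix (Fin 3) (Fin 3) ℂ} {lam K : ℝ}
    (hunit : ∀ x, a x ∈ unitaryGroup (Fin 3) ℂ) (hne : ∀ x, exp (lam * I) ≠ a x 1 1)
    (hA : ∀ x, coefA (a x) lam ≠ 0) (hK : ∀ x, ‖(exp (lam * I) - a x 1 1)⁻¹‖ ≤ K) :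
    IsQWEigenvalue a (exp (lam * I)) ↔ ∃ Φ, Φ ≠ 0 ∧ (Summable fun x => ∑ i, ‖Φ x i‖ ^ 2) ∧
      IsTransferSolution (fun x => transfer (a x) lam) Φ := by
  simp only [isQWEigenvalue_iff_exists_mulVec_eq,
    forall_mulVec_eq_iff_exists_liftedState hunit hne hA]
  constructor
  · rintro ⟨_, h0, hsum, Φ, hΦ, rfl⟩
    exact ⟨Φ, mt liftedState_eq_zero_iff.2 h0, (summable_liftedState_iff hunit hK).1 hsum, hΦ⟩
  · rintro ⟨Φ, h0, hsum, hΦ⟩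
    exact ⟨_, mt liftedState_eq_zero_iff.1 h0, (summable_liftedState_iff hunit hK).2 hsum, Φ, hΦ,
      rfl⟩

lemma finite_range_of_eventually_const {α : Type*} {f : ℤ → α} {b c : α} {m p : ℤ}
    (hp : ∀ x, p ≤ x → f x = b) (hm : ∀ x, x < m → f x = c) : (Set.range f).Finite := by
  refine (((Set.finite_Ico m p).image f).insert b |>.insert c).subset ?_
  rintro _ ⟨x, rfl⟩
  rcases lt_or_ge x m with hxm | hxm
  · exact Or.inl (hm x hxm)
  rcases le_or_gt p x with hxp | hxp
  · exact Or.inr (Or.inl (hp x hxp))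
  · exact Or.inr (Or.inr ⟨x, ⟨hxm, hxp⟩, rfl⟩)

theorem two_phase_defects_eigenvalue_iff_cross_general (a : ℤ → Matrix (Fin 3) (Fin 3) ℂ)
    (hunit : ∀ x, a x ∈ Matrix.unitaryGroup (Fin 3) ℂ) (xp xm : ℤ) (hmp : xm ≤ xp)
    (Cp Cm : Matrix (Fin 3) (Fin 3) ℂ)
    (hCp : ∀ x, xp ≤ x → a x = Cp) (hCm : ∀ x, x < xm → a x = Cm) (lam : ℝ)
    (hne : ∀ x, Complex.exp (lam * Complex.I) ≠ a x 1 1) (hA : ∀ x, coefA (a x) lam ≠ 0) :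
    IsQWEigenvalue a (Complex.exp (lam * Complex.I)) ↔
      (2 < ‖(transfer Cp lam).trace‖ ∧ 2 < ‖(transfer Cm lam).trace‖ ∧
        ∀ (ζm ζp : ℂ) (vm vp : Fin 2 → ℂ),
          vm ≠ 0 → (transfer Cm lam).mulVec vm = ζm • vm → 1 < ‖ζm‖ →
          vp ≠ 0 → (transfer Cp lam).mulVec vp = ζp • vp → ‖ζp‖ < 1 →
          cross ((Tprod (fun y => transfer (a y) lam) xm (xp - xm).toNat).mulVec vm)
            vp = 0) := by
  obtain ⟨K, hK⟩ := ((finite_range_of_eventually_const hCp hCm).image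
    fun M => ‖(exp (lam * I) - M 1 1)⁻¹‖).bddAbove
  have hbound : ∀ x, ‖(exp (lam * I) - a x 1 1)⁻¹‖ ≤ K := fun x =>
    hK (Set.mem_image_of_mem _ (Set.mem_range_self x))
  have hflux : ∀ x, PreservesFlux (transfer (a x) lam) := fun x =>
    preservesFlux_transfer (hunit x) (hne x) (hA x)
  have hSp : PreservesFlux (transfer Cp lam) := hCp xp le_rfl ▸ hflux xp
  have hSm : PreservesFlux (transfer Cm lam) := hCm (xm - 1) (by lia) ▸ hflux (xm - 1)
  have hdet : ∀ x, ‖(transfer (a x) lam).det‖ = 1 := fun x => (hflux x).norm_det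
  rw [isQWEigenvalue_iff_exists_isTransferSolution hunit hne hA hbound,
    exists_summable_isTransferSolution_iff hdet hmp (fun x hx => by rw [hCp x hx])
      (fun x hx => by rw [hCm x hx]),
    exists_isExpanded_isContracted_iff
      (isUnit_det_Tprod (fun x => isUnit_det_of_norm_eq_one (hdet x)) xm _) hSp hSm]
  refine and_congr_right fun _ => and_congr_right fun _ => ⟨?_, ?_⟩
  · intro h ζm ζp vm vp hvm hζvm hζm hvp hζvp hζp
    exact h vm vp ⟨hvm, ζm, hζvm, hζm⟩ ⟨hvp, ζp, hζvp, hζp⟩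
  · rintro h vm vp ⟨hvm, ζm, hζvm, hζm⟩ ⟨hvp, ζp, hζvp, hζp⟩
    exact h ζm ζp vm vp hvm hζvm hζm hvp hζvp hζp

/-- for a two-phase walk with finitely many defects (and `A_x(λ) ≠ 0`
everywhere), `e^{iλ}` is an eigenvalue of `U` iff `|tr T_{±∞}(λ)| > 2` and
`(T_{[x₋,x₊]} v⁻) × v⁺ = 0` for eigenvectors `v⁻` (modulus-`>1` eigenvalue of
`T_{−∞}(λ)`) and `v⁺` (modulus-`<1` eigenvalue of `T_{+∞}(λ)`). -/
theorem two_phase_defects_eigenvalue_iff_cross (a : ℤ → Matrix (Fin 3) (Fin 3) ℂ)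
    (hunit : ∀ x, a x ∈ Matrix.unitaryGroup (Fin 3) ℂ)
    (h13 : ∀ x, ‖a x 0 2‖ ≠ 1) (h22 : ∀ x, ‖a x 1 1‖ ≠ 1) (h31 : ∀ x, ‖a x 2 0‖ ≠ 1)
    (xp xm : ℤ) (hxp : 0 ≤ xp) (hxm : xm < 0)
    (Cp Cm : Matrix (Fin 3) (Fin 3) ℂ)
    (hCp : ∀ x, xp ≤ x → a x = Cp) (hCm : ∀ x, x < xm → a x = Cm)
    (lam : ℝ) (hlam : lam ∈ Set.Ico 0 (2 * Real.pi))
    (hne : ∀ x, Complex.exp (lam * Complex.I) ≠ a x 1 1)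
    (hA : ∀ x, coefA (a x) lam ≠ 0)
    (hAp : coefA Cp lam ≠ 0) (hAm : coefA Cm lam ≠ 0) :
    IsQWEigenvalue a (Complex.exp (lam * Complex.I)) ↔
      (2 < ‖(transfer Cp lam).trace‖ ∧ 2 < ‖(transfer Cm lam).trace‖ ∧
        ∀ (ζm ζp : ℂ) (vm vp : Fin 2 → ℂ),
          vm ≠ 0 → (transfer Cm lam).mulVec vm = ζm • vm → 1 < ‖ζm‖ →
          vp ≠ 0 → (transfer Cp lam).mulVec vp = ζp • vp → ‖ζp‖ < 1 →
          cross ((Tprod (fun y => transfer (a y) lam) xm (xp - xm).toNat).mulVec vm)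
            vp = 0) :=
  two_phase_defects_eigenvalue_iff_cross_general a hunit xp xm (hxm.le.trans hxp) Cp Cm hCp hCm lam
    hne hA
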